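/- Let ω be a minuscule weight, I = {α ∈ S : ⟨ω, α∨⟩ = 0} and W^I = {w ∈ W : w(α) > 0 for all α ∈ I}. Let w = s_{i_1}·s_{i_2}⋯s_{i_k} be any product of simple reflections (not assumed reduced) such that ht(ω − s_{i_1}·s_{i_2}⋯s_{i_k}(ω)) = k. Then w ∈ W^I and ℓ(w) = k. -/

import Mathlib

open scoped RealInnerProductSpace

/-- A finite reduced crystallographic root system `Φ` spanning a real inner product
space `V`, together with a fixed base of simple roots `α 0, …, α (l-1)`: every root is
a nonnegative or nonpositive integral combination of the simple roots.  The simple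
reflections `s i` are given by the usual formula `s_α(λ) = λ − ⟨λ, α∨⟩ α`. -/
structure RootSystemWithBase (V : Type*) [NormedAddCommGroup V] [InnerProductSpace ℝ V] where
  l : ℕ
  Φ : Finset V
  α : Fin l → V
  s : Fin l → V ≃ₗ[ℝ] V
  α_mem : ∀ i, α i ∈ Φ
  root_ne_zero : ∀ β ∈ Φ, β ≠ (0 : V)
  root_span : Submodule.span ℝ (Φ : Set V) = ⊤
  simple_indep : LinearIndependent ℝ α
  crystallographic : ∀ β ∈ Φ, ∀ γ ∈ Φ, ∃ z : ℤ, 2 * ⟪β, γ⟫ / ⟪γ, γ⟫ = (z : ℝ)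
  reduced : ∀ β ∈ Φ, ∀ c : ℝ, c • β ∈ Φ → c = 1 ∨ c = -1
  base : ∀ β ∈ Φ,
    (∃ c : Fin l → ℤ, (∀ i, 0 ≤ c i) ∧ β = ∑ i, (c i : ℝ) • α i) ∨
    (∃ c : Fin l → ℤ, (∀ i, 0 ≤ c i) ∧ β = -(∑ i, (c i : ℝ) • α i))
  s_apply : ∀ i v, s i v = v - (2 * ⟪v, α i⟫ / ⟪α i, α i⟫) • α i
  s_root : ∀ β ∈ Φ, ∀ i, s i β ∈ Φ

namespace RootSystemWithBase

variable {V : Type*} [NormedAddCommGroup V] [InnerProductSpace ℝ V]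

/-- The pairing `⟨λ, β∨⟩ = 2(λ,β)/(β,β)`. -/
noncomputable def pairing (_D : RootSystemWithBase V) (lam β : V) : ℝ :=
  2 * ⟪lam, β⟫ / ⟪β, β⟫

/-- The Weyl group: the subgroup of `GL(V)` generated by the simple reflections. -/
def W (D : RootSystemWithBase V) : Subgroup (V ≃ₗ[ℝ] V) := Subgroup.closure (Set.range D.s)

/-- The product `s_{i₁} · s_{i₂} ⋯ s_{i_k}` of simple reflections along a word. -/
def wordProd (D : RootSystemWithBase V) (L : List (Fin D.l)) : V ≃ₗ[ℝ] V := (L.map D.s).prod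

/-- The length `ℓ(w)`: the least `k` such that `w` is a product of `k` simple
reflections. -/
noncomputable def len (D : RootSystemWithBase V) (w : V ≃ₗ[ℝ] V) : ℕ :=
  sInf {k | ∃ L : List (Fin D.l), L.length = k ∧ D.wordProd L = w}

/-- `v` is a linear combination of the simple roots with all coefficients `≥ 0`. -/
def IsNonnegComb (D : RootSystemWithBase V) (v : V) : Prop :=
  ∃ c : Fin D.l → ℝ, (∀ i, 0 ≤ c i) ∧ v = ∑ i, c i • D.α i

/-- `v > 0`: a nonzero nonnegative combination of the simple roots. -/
def IsPos (D : RootSystemWithBase V) (v : V) : Prop := D.IsNonnegComb v ∧ v ≠ 0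

/-- `x ≤ y` for vectors: `y − x` is a nonnegative combination of the simple roots. -/
def vle (D : RootSystemWithBase V) (x y : V) : Prop := D.IsNonnegComb (y - x)

/-- `λ` is dominant: `⟨λ, αᵢ∨⟩ ≥ 0` for all `i`. -/
def IsDominant (D : RootSystemWithBase V) (lam : V) : Prop :=
  ∀ i, 0 ≤ D.pairing lam (D.α i)

/-- `ω` is minuscule: dominant with `⟨ω, β∨⟩ ∈ {−1, 0, 1}` for every root `β`. -/
def IsMinuscule (D : RootSystemWithBase V) (ω : V) : Prop :=
  D.IsDominant ω ∧ ∀ β ∈ D.Φ, D.pairing ω β = -1 ∨ D.pairing ω β = 0 ∨ D.pairing ω β = 1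

/-- `W^I = {w ∈ W : w(α) > 0 for all α ∈ I}` where `I = {α ∈ S : ⟨ω, α∨⟩ = 0}`. -/
def WI (D : RootSystemWithBase V) (ω : V) : Set (V ≃ₗ[ℝ] V) :=
  {w | w ∈ D.W ∧ ∀ i, D.pairing ω (D.α i) = 0 → D.IsPos (w (D.α i))}

/-- `w ≤ τ` in `W`:  `ℓ(τ) = ℓ(w) + ℓ(τ w⁻¹)`. -/
def wle (D : RootSystemWithBase V) (w τ : V ≃ₗ[ℝ] V) : Prop :=
  D.len τ = D.len w + D.len (τ * w⁻¹)

end RootSystemWithBase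

/-!
Each letter `s_j` of a word, read from right to left, lowers the current vector `v` by
`⟨v, α_j∨⟩ α_j`, so `ht(ω − w(ω))` is a sum of `k` pairings, each at most `1` because `W` permutes
the roots. Applied to a shortest word for `w`, this bound gives `ht(ω − w(ω)) ≤ ℓ(w) ≤ k`; and if
the sum equals `k`, then every pairing equals `1`. Now let `⟨ω, α∨⟩ = 0` with `α` simple. The images
of `α` under the right factors of the word stay positive: `s_j` could only send a positive root to a
negative one if that root were `α_j`, and then the pairing `1` contributed by `s_j` would be
`⟨ω, α∨⟩ = 0`, carried over by the letters to its right.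
-/

namespace RootSystemWithBase

variable {V : Type*} [NormedAddCommGroup V] [InnerProductSpace ℝ V] (D : RootSystemWithBase V)

theorem span_range_simple : Submodule.span ℝ (Set.range D.α) = ⊤ := by
  refine eq_top_iff.2 (D.root_span ▸ Submodule.span_le.2 fun β hβ => ?_)
  have hsum (c : Fin D.l → ℤ) : ∑ i, (c i : ℝ) • D.α i ∈ Submodule.span ℝ (Set.range D.α) :=
    sum_mem fun i _ => Submodule.smul_mem _ _ (Submodule.subset_span ⟨i, rfl⟩)
  rcases D.base β hβ with ⟨c, -, rfl⟩ | ⟨c, -, rfl⟩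
  · exact hsum c
  · exact neg_mem (hsum c)

/-- The simple roots as a basis of `V`; its coordinates express positivity and height. -/
noncomputable def simpleBasis : Module.Basis (Fin D.l) ℝ V :=
  .mk D.simple_indep D.span_range_simple.ge

@[simp]
theorem simpleBasis_apply (i : Fin D.l) : D.simpleBasis i = D.α i :=
  Module.Basis.mk_apply ..

@[simp]
theorem simpleBasis_repr_simple (i : Fin D.l) :
    D.simpleBasis.repr (D.α i) = Finsupp.single i 1 := by
  rw [← simpleBasis_apply, Module.Basis.repr_self]

theorem isNonnegComb_iff {v : V} : D.IsNonnegComb v ↔ ∀ i, 0 ≤ D.simpleBasis.repr v i := by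
  constructor
  · rintro ⟨c, hc, rfl⟩ i
    simpa [Finsupp.single_apply] using hc i
  · intro h
    exact ⟨D.simpleBasis.repr v, h, by simpa using (D.simpleBasis.sum_repr v).symm⟩

theorem isNonnegComb_simple (i : Fin D.l) : D.IsNonnegComb (D.α i) := by
  refine D.isNonnegComb_iff.2 fun j => ?_
  rw [simpleBasis_repr_simple]
  exact Finsupp.single_nonneg.2 zero_le_one j

theorem isNonnegComb_or_isNonnegComb_neg {β : V} (hβ : β ∈ D.Φ) :
    D.IsNonnegComb β ∨ D.IsNonnegComb (-β) := by
  rcases D.base β hβ with ⟨c, hc, rfl⟩ | ⟨c, hc, rfl⟩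
  · exact .inl ⟨fun i => c i, fun i => Int.cast_nonneg (hc i), rfl⟩
  · exact .inr ⟨fun i => c i, fun i => Int.cast_nonneg (hc i), neg_neg _⟩

/-- The height functional `ht (∑ i, c i • α i) = ∑ i, c i`, on all of `V`. -/
noncomputable def height : V →ₗ[ℝ] ℝ :=
  D.simpleBasis.constr ℝ fun _ => 1

@[simp]
theorem height_simple (i : Fin D.l) : D.height (D.α i) = 1 := by
  rw [← simpleBasis_apply, height, Module.Basis.constr_basis]

theorem height_sum_smul (c : Fin D.l → ℝ) : D.height (∑ i, c i • D.α i) = ∑ i, c i := by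
  simp

theorem s_eq_sub_pairing_smul (i : Fin D.l) (v : V) :
    D.s i v = v - D.pairing v (D.α i) • D.α i :=
  D.s_apply i v

theorem s_eq_reflection (i : Fin D.l) (v : V) : D.s i v = (ℝ ∙ D.α i)ᗮ.reflection v := by
  rw [D.s_apply, Submodule.reflection_orthogonal_apply, Submodule.reflection_singleton_apply,
    neg_sub, real_inner_self_eq_norm_sq, real_inner_comm, mul_div_assoc, mul_smul, two_smul,
    two_smul]
  rfl

theorem s_s (i : Fin D.l) (v : V) : D.s i (D.s i v) = v := by
  simp only [s_eq_reflection, Submodule.reflection_reflection]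

theorem pairing_s_s (i : Fin D.l) (v u : V) :
    D.pairing (D.s i v) (D.s i u) = D.pairing v u := by
  simp only [pairing, s_eq_reflection, LinearIsometryEquiv.inner_map_map]

theorem pairing_s_left (i : Fin D.l) (v u : V) :
    D.pairing (D.s i v) u = D.pairing v (D.s i u) := by
  rw [← D.pairing_s_s i v, s_s]

theorem height_sub_s (i : Fin D.l) (v : V) :
    D.height (v - D.s i v) = D.pairing v (D.α i) := by
  simp [s_eq_sub_pairing_smul]

theorem simpleBasis_repr_s_of_ne {i j : Fin D.l} (h : j ≠ i) (v : V) :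
    D.simpleBasis.repr (D.s i v) j = D.simpleBasis.repr v j := by
  simp [s_eq_sub_pairing_smul, Finsupp.single_eq_of_ne h]

theorem isNonnegComb_s_of_ne_simple {β : V} (hβ : β ∈ D.Φ) (hpos : D.IsNonnegComb β)
    {i : Fin D.l} (hne : β ≠ D.α i) : D.IsNonnegComb (D.s i β) := by
  refine (D.isNonnegComb_or_isNonnegComb_neg (D.s_root β hβ i)).resolve_right fun hneg => hne ?_
  rw [isNonnegComb_iff] at hpos hneg
  have hzero (j : Fin D.l) (hj : j ≠ i) : D.simpleBasis.repr β j = 0 := by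
    have hle := hneg j
    rw [map_neg, Finsupp.neg_apply, D.simpleBasis_repr_s_of_ne hj] at hle
    exact le_antisymm (neg_nonneg.1 hle) (hpos j)
  have hβ_eq : β = D.simpleBasis.repr β i • D.α i := by
    rw [← simpleBasis_apply]
    conv_lhs => rw [← D.simpleBasis.sum_repr β]
    exact Fintype.sum_eq_single i fun j hj => by rw [hzero j hj, zero_smul]
  rcases D.reduced _ (D.α_mem i) _ (hβ_eq ▸ hβ) with hone | hneg_one
  · rw [hβ_eq, hone, one_smul]
  · linarith [hpos i]

@[simp]
theorem wordProd_nil : D.wordProd [] = 1 :=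
  rfl

@[simp]
theorem wordProd_cons (i : Fin D.l) (L : List (Fin D.l)) :
    D.wordProd (i :: L) = D.s i * D.wordProd L := by
  simp [wordProd]

theorem wordProd_mem_W (L : List (Fin D.l)) : D.wordProd L ∈ D.W :=
  Subgroup.list_prod_mem _ <| List.forall_mem_map.2 fun i _ => Subgroup.subset_closure ⟨i, rfl⟩

theorem wordProd_root (L : List (Fin D.l)) {β : V} (hβ : β ∈ D.Φ) : D.wordProd L β ∈ D.Φ := by
  induction L with
  | nil => exact hβ
  | cons i L ih => simpa using D.s_root _ ih i

theorem pairing_wordProd_wordProd (L : List (Fin D.l)) (v u : V) :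
    D.pairing (D.wordProd L v) (D.wordProd L u) = D.pairing v u := by
  induction L with
  | nil => rfl
  | cons i L ih => simp [pairing_s_s, ih]

theorem len_wordProd_le (L : List (Fin D.l)) : D.len (D.wordProd L) ≤ L.length :=
  Nat.sInf_le ⟨L, rfl, rfl⟩

theorem exists_length_eq_len_wordProd (L : List (Fin D.l)) :
    ∃ M : List (Fin D.l), M.length = D.len (D.wordProd L) ∧ D.wordProd M = D.wordProd L :=
  Nat.sInf_mem (s := {k | ∃ M : List (Fin D.l), M.length = k ∧ D.wordProd M = D.wordProd L})
    ⟨L.length, L, rfl, rfl⟩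

theorem height_sub_wordProd_cons (v : V) (i : Fin D.l) (L : List (Fin D.l)) :
    D.height (v - D.wordProd (i :: L) v) =
      D.height (v - D.wordProd L v) + D.pairing (D.wordProd L v) (D.α i) := by
  rw [← height_sub_s, ← map_add, sub_add_sub_cancel, wordProd_cons, LinearEquiv.mul_apply]

theorem isNonnegComb_wordProd_simple {v : V} {i : Fin D.l} (hi : D.pairing v (D.α i) = 0)
    {L : List (Fin D.l)}
    (hL : ∀ j M, j :: M <:+ L → D.pairing (D.wordProd M v) (D.α j) ≠ 0) :
    D.IsNonnegComb (D.wordProd L (D.α i)) := by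
  induction L with
  | nil => exact D.isNonnegComb_simple i
  | cons j L ih =>
    have hpos := ih fun k M hM => hL k M (hM.trans (List.suffix_cons j L))
    have hne : D.wordProd L (D.α i) ≠ D.α j := fun heq =>
      hL j L List.suffix_rfl <| by rw [← heq, pairing_wordProd_wordProd, hi]
    simpa using D.isNonnegComb_s_of_ne_simple (D.wordProd_root L (D.α_mem i)) hpos hne

section PairingBound

variable {D} {v : V} {m : ℝ} (hv : ∀ β ∈ D.Φ, D.pairing v β ≤ m)
include hv

theorem pairing_wordProd_le (L : List (Fin D.l)) {β : V} (hβ : β ∈ D.Φ) :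
    D.pairing (D.wordProd L v) β ≤ m := by
  induction L generalizing β with
  | nil => exact hv β hβ
  | cons i L ih => simpa [pairing_s_left] using ih (D.s_root β hβ i)

theorem height_sub_wordProd_le (L : List (Fin D.l)) :
    D.height (v - D.wordProd L v) ≤ m * L.length := by
  induction L with
  | nil => simp
  | cons i L ih =>
    rw [height_sub_wordProd_cons, List.length_cons, Nat.cast_succ, mul_add_one]
    exact add_le_add ih (pairing_wordProd_le hv L (D.α_mem i))

theorem height_sub_wordProd_le_len (L : List (Fin D.l)) :
    D.height (v - D.wordProd L v) ≤ m * D.len (D.wordProd L) := by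
  obtain ⟨M, hlen, hM⟩ := D.exists_length_eq_len_wordProd L
  simpa only [hlen, hM] using height_sub_wordProd_le hv M

theorem pairing_eq_of_cons_suffix_of_height_eq {L : List (Fin D.l)}
    (hL : D.height (v - D.wordProd L v) = m * L.length) {i : Fin D.l} {M : List (Fin D.l)}
    (hM : i :: M <:+ L) : D.pairing (D.wordProd M v) (D.α i) = m := by
  induction L with
  | nil => simp at hM
  | cons j L ih =>
    rw [height_sub_wordProd_cons, List.length_cons, Nat.cast_succ, mul_add_one] at hL
    obtain ⟨hheight, hpairing⟩ := (add_eq_add_iff_eq_and_eq (height_sub_wordProd_le hv L)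
      (pairing_wordProd_le hv L (D.α_mem j))).1 hL
    rcases List.suffix_cons_iff.1 hM with heq | hsuffix
    · obtain ⟨rfl, rfl⟩ := List.cons.inj heq
      exact hpairing
    · exact ih hheight hsuffix

end PairingBound

end RootSystemWithBase

theorem stmt4_general {V : Type*} [NormedAddCommGroup V] [InnerProductSpace ℝ V]
    (D : RootSystemWithBase V) (ω : V) (hω : ∀ β ∈ D.Φ, D.pairing ω β ≤ 1)
    (L : List (Fin D.l)) (c : Fin D.l → ℝ)
    (hc : ω - D.wordProd L ω = ∑ i, c i • D.α i)
    (hht : (∑ i, c i) = (L.length : ℝ)) :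
    D.wordProd L ∈ D.WI ω ∧ D.len (D.wordProd L) = L.length := by
  have hheight : D.height (ω - D.wordProd L ω) = 1 * L.length := by
    rw [hc, D.height_sum_smul, hht, one_mul]
  have hpairing (j : Fin D.l) (M : List (Fin D.l)) (hM : j :: M <:+ L) :
      D.pairing (D.wordProd M ω) (D.α j) ≠ 0 := by
    rw [RootSystemWithBase.pairing_eq_of_cons_suffix_of_height_eq hω hheight hM]
    exact one_ne_zero
  have hlen : L.length ≤ D.len (D.wordProd L) := by
    have hle := RootSystemWithBase.height_sub_wordProd_le_len hω L
    rw [hheight, one_mul, one_mul] at hle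
    exact_mod_cast hle
  exact ⟨⟨D.wordProd_mem_W L, fun i hi => ⟨D.isNonnegComb_wordProd_simple hi hpairing,
    D.root_ne_zero _ (D.wordProd_root L (D.α_mem i))⟩⟩, (D.len_wordProd_le L).antisymm hlen⟩

/-- Let `ω` be a minuscule weight and let
`w = s_{i₁} · s_{i₂} ⋯ s_{i_k}` be any product of simple reflections (not assumed
reduced) with `ht(ω − w(ω)) = k`.  Then `w ∈ W^I` and `ℓ(w) = k`. -/
theorem stmt4 {V : Type*} [NormedAddCommGroup V] [InnerProductSpace ℝ V]
    (D : RootSystemWithBase V) (ω : V) (hω : D.IsMinuscule ω)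
    (L : List (Fin D.l)) (c : Fin D.l → ℝ)
    (hc : ω - D.wordProd L ω = ∑ i, c i • D.α i)
    (hht : (∑ i, c i) = (L.length : ℝ)) :
    D.wordProd L ∈ D.WI ω ∧ D.len (D.wordProd L) = L.length := by
  exact stmt4_general D ω (fun β hβ => by rcases hω.2 β hβ with h | h | h <;> simp [h]) L c hc hht
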